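/- Let D be a digraph with n vertices, m arcs and minimum outdegree d ≥ 4, let X, Y be a partition of V(D) with e(X) = 0, set θ := min{|θ(X₁,X₂)| : X₁,X₂ a partition of X}, X' := {x ∈ X : s(x) ≥ θ}, g := Σ_{x∈X∖X'} s(x), and b := (1/2)·Σ_{x∈X}(d(x) − s(x)). Let ε > 0 and suppose every y ∈ Y satisfies d(y) ≤ ε²m/4, and suppose |X'| = 2k+1 with k ≥ 1. Then either there exists a bipartition V(D) = V₁ ∪ V₂ with min{e(V₁,V₂), e(V₂,V₁)} ≥ ((d−1)/(2(2d−1)) − ε)·m, or, writing X' = {v₁,…,v_{2k+1}} with Δⱼ := s(vⱼ) and Δ₁ ≥ Δ₂ ≥ … ≥ Δ_{2k+1}, one has b < (2(2d−1)(k+1)/(3d−1))·n + ((d²−5d+2)/(3d−1))·(Σ_{j=1}^{k−1} Δⱼ + Δ_{2k} + Δ_{2k+1}) − ((d²+2d−1)/(3d−1))·Σ_{j=k}^{2k−1} Δⱼ + (d(d−1)/(3d−1))·g − ((d−1)²/(2d(3d−1)))·e(Y). -/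

import Mathlib

open Finset

/-- Number of arcs of the digraph `A` directed from a vertex of `S` to a vertex of `T`. -/
def dArcs {V : Type} [Fintype V] [DecidableEq V] (A : V → V → Prop) [DecidableRel A]
    (S T : Finset V) : ℕ :=
  ((S ×ˢ T).filter fun p => A p.1 p.2).card

/-- Outdegree of `x`. -/
def outDeg {V : Type} [Fintype V] (A : V → V → Prop) [DecidableRel A] (x : V) : ℕ :=
  (Finset.univ.filter fun y => A x y).card

/-- Indegree of `x`. -/
def inDeg {V : Type} [Fintype V] (A : V → V → Prop) [DecidableRel A] (x : V) : ℕ :=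
  (Finset.univ.filter fun y => A y x).card

/-- Degree of `x`: outdegree plus indegree. -/
def deg {V : Type} [Fintype V] (A : V → V → Prop) [DecidableRel A] (x : V) : ℕ :=
  outDeg A x + inDeg A x

/-- `s(x) = max{d⁺(x) − d⁻(x), d⁻(x) − d⁺(x)}`. -/
def sVal {V : Type} [Fintype V] (A : V → V → Prop) [DecidableRel A] (x : V) : ℤ :=
  max ((outDeg A x : ℤ) - (inDeg A x : ℤ)) ((inDeg A x : ℤ) - (outDeg A x : ℤ))

/-- The gap `θ(X₁,X₂) = (e(X₁,Y)+e(Y,X₂)) − (e(X₂,Y)+e(Y,X₁))`. -/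
def gap {V : Type} [Fintype V] [DecidableEq V] (A : V → V → Prop) [DecidableRel A]
    (X₁ X₂ Y : Finset V) : ℤ :=
  ((dArcs A X₁ Y : ℤ) + (dArcs A Y X₂ : ℤ)) - ((dArcs A X₂ Y : ℤ) + (dArcs A Y X₁ : ℤ))

/-!
Rounding the vertices of `Y` one by one moves the two opposite cuts, seen as a point of the plane,
by at most `ε * m`. So it suffices to cut `X` and to let every vertex of `Y` join the first part
with one common probability `p`.

If no balanced cut exists, then `p = 1 / 2` and an optimal partition of `X` give `m < (2d - 1) θ`,
hence `n < 2 θ`. By minimality of `θ` no signed sum of the `s(x)` over `X'` has absolute value below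
`θ + g`, and exchanging two vertices of `X'` changes it by at most `2 (n - θ) < 2 θ`, too little to
change its sign. So any subset `P` of `X'` with more than half of its vertices outweighs its
complement `N` by at least `θ + g`.

Among `v₁, …, v_{2k-1}` some `k` vertices have their larger degree on the same side; they form `N`.
Cut so that all of `N` favours the backward direction and all of `P` the forward one. For
`p = (d - 1) / (2d)` the weight of `P` makes the forward cut large enough, so it is the backward
cut that fails, and this failure is the asserted bound on `b`.
-/

section Rounding

variable {ι E : Type*} [DecidableEq ι] [NormedAddCommGroup E] [InnerProductSpace ℝ E]

/-- The function `f` is affine in each coordinate, and on the unit cube its slope in coordinate `i`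
has norm at most `c i`. Slopes are described by increments of `f` to avoid derivatives. -/
def CoordAffineWith (f : (ι → ℝ) → E) (c : ι → ℝ) : Prop :=
  ∀ z ∈ Set.Icc (0 : ι → ℝ) 1, ∀ i, ∃ D : E, ‖D‖ ≤ c i ∧
    ∀ t : ℝ, f (Function.update z i t) = f z + (t - z i) • D

lemma weighted_norm_sq_add_smul (u D : E) (p : ℝ) :
    p * ‖u + (1 - p) • D‖ ^ 2 + (1 - p) * ‖u + (0 - p) • D‖ ^ 2 =
      ‖u‖ ^ 2 + p * (1 - p) * ‖D‖ ^ 2 := by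
  simp only [norm_add_sq_real, norm_smul, inner_smul_right, mul_pow, Real.norm_eq_abs, sq_abs]
  ring

namespace CoordAffineWith

variable {f : (ι → ℝ) → E} {c : ι → ℝ}

-- The average over a Bernoulli value with mean `z i` grows by at most `c i ^ 2 / 4`.
lemma exists_update_norm_sq_le (hf : CoordAffineWith f c) {z : ι → ℝ}
    (hz : z ∈ Set.Icc (0 : ι → ℝ) 1) (i : ι) (a : E) :
    ∃ t : ℝ, (t = 0 ∨ t = 1) ∧
      ‖f (Function.update z i t) - a‖ ^ 2 ≤ ‖f z - a‖ ^ 2 + c i ^ 2 / 4 := by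
  obtain ⟨D, hD, hupd⟩ := hf z hz i
  have h0 : 0 ≤ z i := hz.1 i
  have h1 : 0 ≤ 1 - z i := sub_nonneg.2 (hz.2 i)
  have hmean := weighted_norm_sq_add_smul (f z - a) D (z i)
  have hvar : z i * (1 - z i) * ‖D‖ ^ 2 ≤ 1 / 4 * c i ^ 2 := by
    gcongr
    nlinarith [sq_nonneg (z i - 1 / 2)]
  by_contra! hlt
  have hlt0 := hlt 0 (.inl rfl)
  have hlt1 := hlt 1 (.inr rfl)
  rw [hupd, add_sub_right_comm] at hlt0 hlt1
  have hcombo := (lt_min hlt1 hlt0).trans_le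
    (Convex.min_le_combo _ _ h0 h1 (add_sub_cancel (z i) 1))
  simp only [smul_eq_mul] at hcombo
  linarith

lemma exists_round (hf : CoordAffineWith f c) {z : ι → ℝ} (hz : z ∈ Set.Icc (0 : ι → ℝ) 1)
    (a : E) (S : Finset ι) :
    ∃ z' ∈ Set.Icc (0 : ι → ℝ) 1, (∀ i ∈ S, z' i = 0 ∨ z' i = 1) ∧ (∀ i ∉ S, z' i = z i) ∧
      ‖f z' - a‖ ^ 2 ≤ ‖f z - a‖ ^ 2 + ∑ i ∈ S, c i ^ 2 / 4 := by
  induction S using Finset.induction_on with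
  | empty => exact ⟨z, hz, by simp, by simp, by simp⟩
  | insert i S hi ih =>
    obtain ⟨z', hz', hS, hSc, hle⟩ := ih
    obtain ⟨t, ht, hlt⟩ := hf.exists_update_norm_sq_le hz' i a
    have ht01 : 0 ≤ t ∧ t ≤ 1 := by rcases ht with rfl | rfl <;> norm_num
    refine ⟨Function.update z' i t, ⟨?_, ?_⟩, fun j hj => ?_, fun j hj => ?_, ?_⟩
    · exact le_update_iff.2 ⟨ht01.1, fun j _ => hz'.1 j⟩
    · exact update_le_iff.2 ⟨ht01.2, fun j _ => hz'.2 j⟩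
    · obtain rfl | hji := eq_or_ne j i
      · simpa using ht
      · simpa [hji] using hS j (mem_of_mem_insert_of_ne hj hji)
    · rw [mem_insert, not_or] at hj
      simpa [hj.1] using hSc j hj.2
    · rw [sum_insert hi]
      linarith

end CoordAffineWith

end Rounding

section FinsetSums

variable {α : Type*}

lemma sum_le_sum_of_card_eq {f : α → ℝ} {S T : Finset α} (hcard : #S = #T)
    (h : ∀ x ∈ S, ∀ y ∈ T, f x ≤ f y) : ∑ x ∈ S, f x ≤ ∑ y ∈ T, f y := by
  obtain rfl | hT := T.eq_empty_or_nonempty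
  · simp [card_eq_zero.1 hcard]
  obtain ⟨y, hy, hmin⟩ := exists_min_image T f hT
  calc ∑ x ∈ S, f x ≤ #S • f y := sum_le_card_nsmul _ _ _ fun x hx => h x hx y hy
    _ = #T • f y := by rw [hcard]
    _ ≤ ∑ y ∈ T, f y := card_nsmul_le_sum _ _ _ hmin

lemma sum_ite_mem_of_subset [DecidableEq α] {S T : Finset α} (hT : T ⊆ S) (f g : α → ℝ) :
    ∑ x ∈ S, (if x ∈ T then f x else g x) = ∑ x ∈ T, f x + ∑ x ∈ S \ T, g x := by
  rw [← sum_inter_add_sum_sdiff S T, inter_eq_right.2 hT]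
  exact congrArg₂ _ (sum_congr rfl fun x hx => if_pos hx)
    (sum_congr rfl fun x hx => if_neg (mem_sdiff.1 hx).2)

lemma exists_lt_of_sum_lt_sum_of_card_le {f : α → ℝ} {S T : Finset α} (hf : ∀ x ∈ T, 0 ≤ f x)
    (hcard : #S ≤ #T) (h : ∑ x ∈ T, f x < ∑ x ∈ S, f x) : ∃ x ∈ T, ∃ y ∈ S, f x < f y := by
  by_contra! hle
  obtain ⟨T', hT', hcard'⟩ := exists_subset_card_eq hcard
  refine h.not_ge ?_
  calc ∑ x ∈ S, f x ≤ ∑ x ∈ T', f x :=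
        sum_le_sum_of_card_eq hcard'.symm fun y hy x hx => hle x (hT' hx) y hy
    _ ≤ ∑ x ∈ T, f x := sum_le_sum_of_subset_of_nonneg hT' fun x hx _ => hf x hx

lemma exists_monochromatic_subset {S : Finset α} {k : ℕ} (hS : 2 * k ≤ #S + 1) (p : α → Prop) :
    ∃ I ⊆ S, #I = k ∧ ((∀ i ∈ I, p i) ∨ ∀ i ∈ I, ¬ p i) := by
  classical
  have hcard : #{i ∈ S | p i} + #{i ∈ S | ¬ p i} = #S := card_filter_add_card_filter_not _
  have h : k ≤ #{i ∈ S | p i} ∨ k ≤ #{i ∈ S | ¬ p i} := by omega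
  rcases h with h | h
  all_goals obtain ⟨I, hI, hIk⟩ := exists_subset_card_eq h
  · exact ⟨I, hI.trans (filter_subset _ _), hIk, .inl fun i hi => (mem_filter.1 (hI hi)).2⟩
  · exact ⟨I, hI.trans (filter_subset _ _), hIk, .inr fun i hi => (mem_filter.1 (hI hi)).2⟩

lemma sum_Icc_le_sum_of_antitoneOn {f : ℕ → ℝ} {l : ℕ} (hf : AntitoneOn f (Set.Icc 1 l))
    {I : Finset ℕ} (hI : I ⊆ Icc 1 l) : ∑ j ∈ Icc (l + 1 - #I) l, f j ≤ ∑ j ∈ I, f j := by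
  have hIl : #I ≤ l := by simpa using card_le_card hI
  set C := Icc (l + 1 - #I) l with hC
  have hcard : #C = #I := by
    rw [hC, Nat.card_Icc]
    omega
  have hdiff : ∑ j ∈ C \ I, f j ≤ ∑ j ∈ I \ C, f j := by
    refine sum_le_sum_of_card_eq (card_sdiff_comm hcard) fun j hj i hi => ?_
    obtain ⟨hjC, hjI⟩ := mem_sdiff.1 hj
    obtain ⟨hiI, hiC⟩ := mem_sdiff.1 hi
    have hi' := mem_Icc.1 (hI hiI)
    rw [hC, mem_Icc] at hjC hiC
    have hpos : #I ≠ 0 := card_ne_zero_of_mem hiI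
    exact hf ⟨hi'.1, hi'.2⟩ ⟨by omega, hjC.2⟩ (by omega)
  rw [← sum_inter_add_sum_sdiff C I f, ← sum_inter_add_sum_sdiff I C f, inter_comm]
  gcongr

end FinsetSums

section SignedSums

variable {V : Type*} [DecidableEq V] {s : V → ℝ} {S R X X' : Finset V} {θ τ : ℝ}

/-- The signed sum of `s` over `S` with sign `+` on `R` and `-` off `R`: the gap of a partition of
`S`, in terms of the contributions of the single vertices. -/
def signedSum (s : V → ℝ) (S R : Finset V) : ℝ :=
  ∑ x ∈ S, if x ∈ R then s x else -s x

lemma signedSum_congr_right {Q : Finset V} (h : ∀ x ∈ S, x ∈ Q ↔ x ∈ R) :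
    signedSum s S Q = signedSum s S R :=
  sum_congr rfl fun x hx => by simp only [h x hx]

lemma signedSum_eq_sum_sub_sum (hR : R ⊆ S) :
    signedSum s S R = ∑ x ∈ R, s x - ∑ x ∈ S \ R, s x := by
  rw [signedSum, sum_ite_mem_of_subset hR, sum_neg_distrib, sub_eq_add_neg]

lemma signedSum_abs (s : V → ℝ) (S R : Finset V) :
    signedSum (fun x => |s x|) S R = signedSum s S {x ∈ S | x ∈ R ↔ 0 ≤ s x} := by
  refine sum_congr rfl fun x hx => ?_
  obtain h | h := le_or_gt 0 (s x)
  · simp [hx, h, abs_of_nonneg h]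
  · by_cases hR : x ∈ R <;> simp [hx, h, hR, abs_of_neg h]

lemma add_sum_le_abs_of_forall_signedSum (hs : ∀ x ∈ S, 0 ≤ s x ∧ s x < θ) {t : ℝ}
    (h : ∀ R, θ ≤ |t + signedSum s S R|) : θ + ∑ x ∈ S, s x ≤ |t| := by
  induction S using Finset.induction_on generalizing t with
  | empty => simpa [signedSum] using h ∅
  | insert a S ha ih =>
    have hne : ∀ x ∈ S, x ≠ a := fun x hx => ne_of_mem_of_not_mem hx ha
    have haθ := (hs a (mem_insert_self a S)).2
    have hS : ∀ x ∈ S, 0 ≤ s x ∧ s x < θ := fun x hx => hs x (mem_insert_of_mem hx)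
    have hplus : θ + ∑ x ∈ S, s x ≤ |t + s a| := by
      refine ih hS fun R => ?_
      rw [signedSum_congr_right (Q := R) (R := insert a R) fun x hx => by simp [hne x hx]]
      simpa [signedSum, sum_insert ha, add_assoc] using h (insert a R)
    have hminus : θ + ∑ x ∈ S, s x ≤ |t - s a| := by
      refine ih hS fun R => ?_
      rw [signedSum_congr_right (Q := R) (R := R.erase a) fun x hx => by simp [hne x hx]]
      simpa [signedSum, sum_insert ha, add_assoc, sub_eq_add_neg] using h (R.erase a)
    have hsum : 0 ≤ ∑ x ∈ S, s x := sum_nonneg fun x hx => (hS x hx).1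
    rw [sum_insert ha]
    -- The sign of `s a` that moves `t` towards `0` cannot overshoot, because `s a < θ`.
    obtain ht | ht := le_total 0 t
    · rw [abs_of_nonneg ht]
      rcases le_abs.1 hminus with h' | h' <;> linarith
    · rw [abs_of_nonpos ht]
      rcases le_abs.1 hplus with h' | h' <;> linarith

lemma add_sum_sdiff_le_abs_signedSum (hX' : X' ⊆ X) (hs : ∀ x ∈ X \ X', 0 ≤ s x ∧ s x < θ)
    (h : ∀ R, θ ≤ |signedSum s X R|) (Q : Finset V) :
    θ + ∑ x ∈ X \ X', s x ≤ |signedSum s X' Q| := by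
  refine add_sum_le_abs_of_forall_signedSum hs fun R => ?_
  convert h (Q ∩ X' ∪ R \ X') using 2
  rw [signedSum_congr_right (S := X') (Q := Q) (R := Q ∩ X' ∪ R \ X') fun x hx => by simp [hx],
    signedSum_congr_right (S := X \ X') (Q := R) (R := Q ∩ X' ∪ R \ X')
      fun x hx => by simp [(mem_sdiff.1 hx).2], add_comm]
  exact sum_sdiff hX'

-- Take a counterexample `P` with the largest sum. Some `x ∈ P` is smaller than some `y ∉ P`, and
-- exchanging them moves the signed sum from below `-τ` by less than `2 * τ`.
lemma le_signedSum_of_card_lt (hs : ∀ x ∈ S, 0 ≤ s x)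
    (hlt : ∀ x ∈ S, ∀ y ∈ S, s y - s x < τ) (habs : ∀ R ⊆ S, τ ≤ |signedSum s S R|)
    (hR : R ⊆ S) (hcard : #S < 2 * #R) : τ ≤ signedSum s S R := by
  by_contra! hbad
  obtain ⟨P, hP, hmax⟩ := exists_max_image {P ∈ S.powersetCard #R | signedSum s S P < τ}
    (fun P => signedSum s S P) ⟨R, mem_filter.2 ⟨mem_powersetCard.2 ⟨hR, rfl⟩, hbad⟩⟩
  simp only [mem_filter, mem_powersetCard, and_imp] at hP hmax
  obtain ⟨⟨hPS, hPcard⟩, hPτ⟩ := hP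
  have hPneg : signedSum s S P ≤ -τ := by
    rcases le_abs.1 (habs P hPS) with h | h <;> linarith
  obtain ⟨z, hz⟩ : P.Nonempty := card_pos.1 (by omega)
  have hτ : 0 < τ := by simpa using hlt z (hPS hz) z (hPS hz)
  have hPsum := signedSum_eq_sum_sub_sum (s := s) hPS
  obtain ⟨x, hx, y, hy, hxy⟩ := exists_lt_of_sum_lt_sum_of_card_le (fun x hx => hs x (hPS hx))
    (by rw [card_sdiff_of_subset hPS]; omega : #(S \ P) ≤ #P) (by linarith)
  obtain ⟨hyS, hyP⟩ := mem_sdiff.1 hy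
  have hyP' : y ∉ P.erase x := fun h => hyP (mem_of_mem_erase h)
  have hsub : insert y (P.erase x) ⊆ S := insert_subset hyS ((erase_subset _ _).trans hPS)
  have hswap : signedSum s S (insert y (P.erase x)) = signedSum s S P + 2 * (s y - s x) := by
    rw [signedSum_eq_sum_sub_sum hsub, signedSum_eq_sum_sub_sum hPS, sum_sdiff_eq_sub hsub,
      sum_sdiff_eq_sub hPS, sum_insert hyP', sum_erase_eq_sub hx]
    ring
  have hxyτ := hlt x (hPS hx) y hyS
  have := hmax _ hsub (by rw [card_insert_of_notMem hyP', card_erase_add_one hx, hPcard])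
    (by linarith)
  linarith

end SignedSums

section Degrees

variable {V : Type} [Fintype V] (A : V → V → Prop) [DecidableRel A]

/-- The paper's `s⁺(x) = d⁺(x) - d⁻(x)`, real-valued like all quantities compared with `ε * m`. -/
def netDeg (x : V) : ℝ := outDeg A x - inDeg A x

/-- The smaller of the in- and outdegree of `x`, which is `(d(x) - s(x)) / 2`; the paper's `b` is
its sum over `X`. -/
def minDeg (x : V) : ℝ := min (outDeg A x) (inDeg A x)

lemma minDeg_nonneg (x : V) : 0 ≤ minDeg A x :=
  le_min (Nat.cast_nonneg _) (Nat.cast_nonneg _)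

lemma cast_sVal_eq_abs_netDeg (x : V) : (sVal A x : ℝ) = |netDeg A x| := by
  rw [sVal, netDeg, abs_eq_max_neg, neg_sub]
  push_cast
  rfl

lemma cast_sVal_nonneg (x : V) : (0 : ℝ) ≤ sVal A x :=
  (abs_nonneg _).trans_eq (cast_sVal_eq_abs_netDeg A x).symm

lemma minDeg_add_sVal (x : V) : minDeg A x + sVal A x = max (outDeg A x : ℝ) (inDeg A x) := by
  rw [cast_sVal_eq_abs_netDeg, netDeg, abs_sub_comm, ← max_sub_min_eq_abs, minDeg]
  ring

lemma cast_deg_eq (x : V) : (deg A x : ℝ) = 2 * minDeg A x + sVal A x := by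
  rw [two_mul, add_assoc, minDeg_add_sVal, minDeg, min_add_max, deg, Nat.cast_add]

lemma minDeg_add_sVal_le_card (x : V) : minDeg A x + sVal A x ≤ Fintype.card V := by
  rw [minDeg_add_sVal, max_le_iff]
  exact ⟨by exact_mod_cast card_le_univ _, by exact_mod_cast card_le_univ _⟩

lemma sum_minDeg_add_sum_sVal_le (S : Finset V) :
    ∑ x ∈ S, minDeg A x + ∑ x ∈ S, (sVal A x : ℝ) ≤ #S * Fintype.card V := by
  rw [← sum_add_distrib, ← nsmul_eq_mul]
  exact sum_le_card_nsmul _ _ _ fun x _ => minDeg_add_sVal_le_card A x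

lemma sum_minDeg_eq (S : Finset V) :
    ∑ x ∈ S, minDeg A x = (∑ x ∈ S, ((deg A x : ℝ) - (sVal A x : ℝ))) / 2 := by
  simp only [cast_deg_eq, add_sub_cancel_right, ← mul_sum]
  ring

lemma minDeg_swap (x : V) : minDeg (Function.swap A) x = minDeg A x :=
  min_comm _ _

lemma sVal_swap (x : V) : sVal (Function.swap A) x = sVal A x :=
  max_comm _ _

variable [DecidableEq V]

lemma dArcs_eq_sum (S T : Finset V) : dArcs A S T = ∑ u ∈ S, ∑ v ∈ T, if A u v then 1 else 0 := by
  rw [dArcs, card_filter, sum_product]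

lemma dArcs_swap (S T : Finset V) : dArcs (Function.swap A) S T = dArcs A T S := by
  rw [dArcs_eq_sum, dArcs_eq_sum, sum_comm]

lemma dArcs_univ_right (S : Finset V) : dArcs A S univ = ∑ x ∈ S, outDeg A x := by
  simp [dArcs_eq_sum, outDeg]

lemma dArcs_univ_left (S : Finset V) : dArcs A univ S = ∑ x ∈ S, inDeg A x := by
  rw [← dArcs_swap, dArcs_univ_right]
  rfl

lemma dArcs_add_dArcs_compl_left (S T : Finset V) :
    dArcs A S T + dArcs A Sᶜ T = dArcs A univ T := by
  simp only [dArcs_eq_sum, sum_add_sum_compl]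

lemma dArcs_add_dArcs_compl_right (S T : Finset V) :
    dArcs A S T + dArcs A S Tᶜ = dArcs A S univ := by
  simp only [← dArcs_swap A, dArcs_add_dArcs_compl_left]

lemma sum_deg : ∑ x, deg A x = 2 * dArcs A univ univ := by
  simp only [deg, sum_add_distrib, ← dArcs_univ_left, ← dArcs_univ_right, two_mul]

variable {A} {X S : Finset V}

lemma dArcs_eq_zero_of_subset (hX : dArcs A X X = 0) {T : Finset V} (hS : S ⊆ X) (hT : T ⊆ X) :
    dArcs A S T = 0 :=
  Nat.eq_zero_of_le_zero (hX ▸ card_le_card (filter_subset_filter _ (product_subset_product hS hT)))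

lemma dArcs_compl_right_eq_sum (hX : dArcs A X X = 0) (hS : S ⊆ X) :
    dArcs A S Xᶜ = ∑ x ∈ S, outDeg A x := by
  rw [← dArcs_univ_right, ← dArcs_add_dArcs_compl_right A S X,
    dArcs_eq_zero_of_subset hX hS subset_rfl, zero_add]

lemma dArcs_compl_left_eq_sum (hX : dArcs A X X = 0) (hS : S ⊆ X) :
    dArcs A Xᶜ S = ∑ x ∈ S, inDeg A x := by
  rw [← dArcs_univ_left, ← dArcs_add_dArcs_compl_left A X S,
    dArcs_eq_zero_of_subset hX subset_rfl hS, zero_add]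

lemma dArcs_univ_univ_eq (hX : dArcs A X X = 0) :
    dArcs A univ univ = ∑ x ∈ X, deg A x + dArcs A Xᶜ Xᶜ := by
  rw [← dArcs_add_dArcs_compl_left A X, ← dArcs_add_dArcs_compl_right A Xᶜ X, dArcs_univ_right,
    dArcs_compl_left_eq_sum hX subset_rfl, ← add_assoc, ← sum_add_distrib]
  rfl

lemma cast_dArcs_univ_univ_eq (hX : dArcs A X X = 0) :
    (dArcs A univ univ : ℝ) =
      2 * ∑ x ∈ X, minDeg A x + ∑ x ∈ X, (sVal A x : ℝ) + dArcs A Xᶜ Xᶜ := by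
  rw [dArcs_univ_univ_eq hX, mul_sum, ← sum_add_distrib]
  push_cast
  simp only [cast_deg_eq]

lemma cast_dArcs_univ_univ_eq_of_subset (hX : dArcs A X X = 0) {X' N : Finset V} (hX' : X' ⊆ X)
    (hN : N ⊆ X') :
    (dArcs A univ univ : ℝ) =
      2 * (∑ x ∈ X' \ N, minDeg A x + ∑ x ∈ X \ (X' \ N), minDeg A x) +
        ∑ x ∈ X' \ N, (sVal A x : ℝ) + ∑ x ∈ N, (sVal A x : ℝ) + ∑ x ∈ X \ X', (sVal A x : ℝ) +
        dArcs A Xᶜ Xᶜ := by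
  rw [cast_dArcs_univ_univ_eq hX, ← sum_sdiff (f := minDeg A) (sdiff_subset.trans hX' : X' \ N ⊆ X),
    ← sum_sdiff hX', ← sum_sdiff hN]
  ring

lemma gap_eq_signedSum (hX : dArcs A X X = 0) (hS : S ⊆ X) :
    (gap A S (X \ S) Xᶜ : ℝ) = signedSum (netDeg A) X S := by
  rw [signedSum_eq_sum_sub_sum hS, gap]
  push_cast
  rw [dArcs_compl_right_eq_sum hX hS, dArcs_compl_left_eq_sum hX hS,
    dArcs_compl_right_eq_sum hX sdiff_subset, dArcs_compl_left_eq_sum hX sdiff_subset]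
  simp only [netDeg, sum_sub_distrib]
  push_cast
  ring

lemma le_abs_signedSum_sVal (hX : dArcs A X X = 0) {θ : ℤ}
    (hθ : ∀ S ⊆ X, θ ≤ |gap A S (X \ S) Xᶜ|) (R : Finset V) :
    (θ : ℝ) ≤ |signedSum (fun x => (sVal A x : ℝ)) X R| := by
  simp only [cast_sVal_eq_abs_netDeg]
  rw [signedSum_abs, ← gap_eq_signedSum hX (filter_subset _ _)]
  exact_mod_cast hθ _ (filter_subset _ _)

end Degrees

section FractionalCuts

variable {V : Type} [Fintype V] {A : V → V → Prop} [DecidableRel A]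

/-- The number of arcs from the part `z = 1` to the part `z = 0`, extended multilinearly to
fractional `z`: the expected cut when `u` joins the first part with probability `z u`. -/
def fracCut (A : V → V → Prop) [DecidableRel A] (z : V → ℝ) : ℝ :=
  ∑ u, ∑ v, if A u v then z u * (1 - z v) else 0

/-- The slope of `fracCut A` at `z` in the coordinate `y`. -/
def cutSlope (A : V → V → Prop) [DecidableRel A] (z : V → ℝ) (y : V) : ℝ :=
  ∑ v, ((if A y v then 1 - z v else 0) - if A v y then z v else 0)

lemma fracCut_update [DecidableEq V] (hA : ∀ v, ¬ A v v) (z : V → ℝ) (y : V) (t : ℝ) :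
    fracCut A (Function.update z y t) = fracCut A z + (t - z y) * cutSlope A z y := by
  have hout : ∑ v, (if A y v then 1 - z v else 0) =
      ∑ u, ∑ v, if u = y then if A u v then 1 - z v else 0 else 0 := by
    rw [sum_comm]
    simp
  have hin : ∑ u, (if A u y then z u else 0) =
      ∑ u, ∑ v, if v = y then if A u v then z u else 0 else 0 := by
    simp
  rw [cutSlope, sum_sub_distrib, hout, hin]
  simp only [fracCut, ← sum_sub_distrib, mul_sum, ← sum_add_distrib]
  refine sum_congr rfl fun u _ => sum_congr rfl fun v _ => ?_
  by_cases huv : A u v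
  · have hne : u ≠ v := fun h => hA u (h ▸ huv)
    obtain rfl | hu := eq_or_ne u y
    · simp only [huv, hne.symm, if_true, if_false, Function.update_self,
        Function.update_of_ne hne.symm, sub_zero]
      ring
    · obtain rfl | hv := eq_or_ne v y
      · simp only [huv, hu, if_true, if_false, Function.update_self, Function.update_of_ne hu]
        ring
      · simp [huv, hu, hv]
  · simp [huv]

lemma abs_cutSlope_add_abs_cutSlope_swap_le {z : V → ℝ} (hz : z ∈ Set.Icc (0 : V → ℝ) 1) (y : V) :
    |cutSlope A z y| + |cutSlope (Function.swap A) z y| ≤ deg A y := by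
  have hdeg : (deg A y : ℝ) = ∑ v, ((if A y v then 1 else 0) + if A v y then 1 else 0) := by
    simp [deg, outDeg, inDeg, sum_add_distrib]
  rw [hdeg]
  refine (add_le_add (abs_sum_le_sum_abs _ _) (abs_sum_le_sum_abs _ _)).trans ?_
  rw [← sum_add_distrib]
  refine sum_le_sum fun v _ => ?_
  have h0 : 0 ≤ z v := hz.1 v
  have h1 : z v ≤ 1 := hz.2 v
  have hmid : |1 - z v - z v| ≤ 1 := abs_le.2 ⟨by linarith, by linarith⟩
  by_cases hyv : A y v <;> by_cases hvy : A v y <;>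
    simp [hyv, hvy, abs_of_nonneg h0, abs_of_nonneg (sub_nonneg.2 h1), add_le_add hmid hmid]

-- The two opposite cuts are packed into a complex number so that one norm controls both.
lemma coordAffineWith_fracCut [DecidableEq V] (hA : ∀ v, ¬ A v v) :
    CoordAffineWith (fun z => (⟨fracCut A z, fracCut (Function.swap A) z⟩ : ℂ))
      (fun y => deg A y) := by
  refine fun z hz y => ⟨⟨cutSlope A z y, cutSlope (Function.swap A) z y⟩, ?_, fun t => ?_⟩
  · exact (Complex.norm_le_abs_re_add_abs_im _).trans (abs_cutSlope_add_abs_cutSlope_swap_le hz y)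
  · apply Complex.ext
    · simpa using fracCut_update hA z y t
    · simpa using fracCut_update (A := Function.swap A) hA z y t

lemma fracCut_eq_of_const [DecidableEq V] {X S : Finset V} (hS : S ⊆ X) {z : V → ℝ} {p : ℝ}
    (h1 : ∀ x ∈ S, z x = 1) (h0 : ∀ x ∈ X \ S, z x = 0) (hp : ∀ x ∈ Xᶜ, z x = p) :
    fracCut A z = dArcs A S (X \ S) + (1 - p) * dArcs A S Xᶜ + p * dArcs A Xᶜ (X \ S) +
      p * (1 - p) * dArcs A Xᶜ Xᶜ := by
  have hsplit (f : V → ℝ) : ∑ v, f v = ∑ v ∈ S, f v + ∑ v ∈ X \ S, f v + ∑ v ∈ Xᶜ, f v := by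
    rw [← sum_add_sum_compl X f, ← sum_sdiff hS, add_comm (∑ v ∈ S, f v)]
  have hblock {T U : Finset V} {a b : ℝ} (hT : ∀ u ∈ T, z u = a) (hU : ∀ v ∈ U, z v = b) :
      ∑ u ∈ T, ∑ v ∈ U, (if A u v then z u * (1 - z v) else 0) = a * (1 - b) * dArcs A T U := by
    rw [dArcs_eq_sum]
    push_cast
    simp only [mul_sum, mul_ite, mul_one, mul_zero]
    exact sum_congr rfl fun u hu => sum_congr rfl fun v hv => by rw [hT u hu, hU v hv]
  rw [fracCut, hsplit]
  simp only [hsplit, sum_add_distrib]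
  rw [hblock h1 h1, hblock h1 h0, hblock h1 hp, hblock h0 h1, hblock h0 h0, hblock h0 hp,
    hblock hp h1, hblock hp h0, hblock hp hp]
  ring

lemma fracCut_eq_dArcs [DecidableEq V] {z : V → ℝ} (hz : ∀ v, z v = 0 ∨ z v = 1) :
    fracCut A z = dArcs A ({v | z v = 1} : Finset V) ({v | z v = 1} : Finset V)ᶜ := by
  have h := fracCut_eq_of_const (A := A) (S := {v | z v = 1}) (p := 0) (subset_univ _)
    (z := z) (by simp) (fun x hx => (hz x).resolve_right (by simpa using hx)) (by simp)
  simpa [dArcs, ← compl_eq_univ_sdiff] using h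

end FractionalCuts

section BalancedCuts

variable {V : Type} [Fintype V] [DecidableEq V] {A : V → V → Prop} [DecidableRel A]
  {X P N S Y : Finset V} {c c' ε p : ℝ}

/-- Some bipartition of the vertices is crossed by at least `c` arcs in each direction. -/
def HasBalancedCut (A : V → V → Prop) [DecidableRel A] (c : ℝ) : Prop :=
  ∃ V₁ V₂ : Finset V, V₁ ∪ V₂ = univ ∧ Disjoint V₁ V₂ ∧
    c ≤ min (dArcs A V₁ V₂ : ℝ) (dArcs A V₂ V₁ : ℝ)

lemma HasBalancedCut.mono (h : HasBalancedCut A c) (hc : c' ≤ c) : HasBalancedCut A c' := by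
  obtain ⟨V₁, V₂, hV, hdisj, hcut⟩ := h
  exact ⟨V₁, V₂, hV, hdisj, hc.trans hcut⟩

lemma HasBalancedCut.swap (h : HasBalancedCut A c) : HasBalancedCut (Function.swap A) c := by
  obtain ⟨V₁, V₂, hV, hdisj, hcut⟩ := h
  refine ⟨V₂, V₁, union_comm V₁ V₂ ▸ hV, hdisj.symm, ?_⟩
  rwa [dArcs_swap A, dArcs_swap A]

lemma hasBalancedCut_of_fracCut (hA : ∀ v, ¬ A v v) (hε : 0 ≤ ε)
    (hdeg : ∀ y ∈ Y, (deg A y : ℝ) ≤ 2 * ε ^ 2 * dArcs A univ univ)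
    {z : V → ℝ} (hz : z ∈ Set.Icc (0 : V → ℝ) 1) (hzY : ∀ x ∉ Y, z x = 0 ∨ z x = 1) :
    HasBalancedCut A
      (min (fracCut A z) (fracCut (Function.swap A) z) - ε * dArcs A univ univ) := by
  set m : ℝ := ↑(dArcs A univ univ) with hm
  have herr : ∑ y ∈ Y, (deg A y : ℝ) ^ 2 / 4 ≤ (ε * m) ^ 2 := by
    have hsum : ∑ y ∈ Y, (deg A y : ℝ) ≤ 2 * m := by
      rw [hm]
      exact_mod_cast (sum_le_univ_sum_of_nonneg fun _ => Nat.zero_le _).trans (sum_deg A).le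
    calc ∑ y ∈ Y, (deg A y : ℝ) ^ 2 / 4
        ≤ ∑ y ∈ Y, ε ^ 2 * m / 2 * deg A y := sum_le_sum fun y hy => by
          nlinarith [hdeg y hy, (deg A y).cast_nonneg (α := ℝ)]
      _ = ε ^ 2 * m / 2 * ∑ y ∈ Y, (deg A y : ℝ) := (mul_sum ..).symm
      _ ≤ ε ^ 2 * m / 2 * (2 * m) := by gcongr
      _ = (ε * m) ^ 2 := by ring
  obtain ⟨z', -, hround, hfix, hdist⟩ := (coordAffineWith_fracCut hA).exists_round hz
    (⟨fracCut A z, fracCut (Function.swap A) z⟩ : ℂ) Y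
  rw [sub_self, norm_zero, zero_pow two_ne_zero, zero_add] at hdist
  have hnorm := abs_le_of_sq_le_sq (hdist.trans herr) (by positivity)
  rw [abs_of_nonneg (norm_nonneg _)] at hnorm
  have hre := (abs_le.1 ((Complex.abs_re_le_norm _).trans hnorm)).1
  have him := (abs_le.1 ((Complex.abs_im_le_norm _).trans hnorm)).1
  simp only [Complex.sub_re, Complex.sub_im] at hre him
  have hz' : ∀ v, z' v = 0 ∨ z' v = 1 := fun v => by
    by_cases hv : v ∈ Y
    · exact hround v hv
    · exact hfix v hv ▸ hzY v hv
  rw [fracCut_eq_dArcs hz'] at hre him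
  rw [dArcs_swap A] at him
  refine ⟨({v | z' v = 1} : Finset V), _ᶜ, union_compl _,
    disjoint_compl_right, ?_⟩
  exact le_min (by linarith [min_le_left (fracCut A z) (fracCut (Function.swap A) z)])
    (by linarith [min_le_right (fracCut A z) (fracCut (Function.swap A) z)])

lemma fracCut_eq_sum_add (hX : dArcs A X X = 0) (hS : S ⊆ X) :
    fracCut A (fun v => if v ∈ S then 1 else if v ∈ X then 0 else p) =
      ∑ x ∈ X, (if x ∈ S then (1 - p) * outDeg A x else p * inDeg A x) +
        p * (1 - p) * dArcs A Xᶜ Xᶜ := by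
  rw [fracCut_eq_of_const (p := p) hS, dArcs_eq_zero_of_subset hX hS sdiff_subset,
    dArcs_compl_right_eq_sum hX hS, dArcs_compl_left_eq_sum hX sdiff_subset,
    sum_ite_mem_of_subset hS, ← mul_sum, ← mul_sum]
  · push_cast
    ring
  · exact fun x hx => if_pos hx
  · exact fun x hx => by rw [if_neg (mem_sdiff.1 hx).2, if_pos (mem_sdiff.1 hx).1]
  · intro x hx
    rw [mem_compl] at hx
    rw [if_neg fun h => hx (hS h), if_neg hx]

lemma hasBalancedCut_of_subset (hA : ∀ v, ¬ A v v) (hε : 0 ≤ ε) (hX : dArcs A X X = 0)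
    (hdeg : ∀ y ∈ Xᶜ, (deg A y : ℝ) ≤ 2 * ε ^ 2 * dArcs A univ univ) (hS : S ⊆ X)
    (hp0 : 0 ≤ p) (hp1 : p ≤ 1) :
    HasBalancedCut A (min (∑ x ∈ X, if x ∈ S then (1 - p) * outDeg A x else p * inDeg A x)
      (∑ x ∈ X, if x ∈ S then (1 - p) * inDeg A x else p * outDeg A x) +
        p * (1 - p) * dArcs A Xᶜ Xᶜ - ε * dArcs A univ univ) := by
  have hz : (fun v => if v ∈ S then 1 else if v ∈ X then 0 else p) ∈ Set.Icc (0 : V → ℝ) 1 := by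
    constructor <;> intro v <;> dsimp only [Pi.zero_apply, Pi.one_apply] <;> split_ifs <;> linarith
  have hcut := hasBalancedCut_of_fracCut hA hε hdeg hz fun x hx => by
    rw [mem_compl, not_not] at hx
    by_cases hxS : x ∈ S <;> simp [hx, hxS]
  have hX' : dArcs (Function.swap A) X X = 0 := by rwa [dArcs_swap A]
  rwa [fracCut_eq_sum_add hX hS, fracCut_eq_sum_add hX' hS, dArcs_swap A, min_add_add_right] at hcut

lemma hasBalancedCut_of_gap (hA : ∀ v, ¬ A v v) (hε : 0 ≤ ε) (hX : dArcs A X X = 0)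
    (hdeg : ∀ y ∈ Xᶜ, (deg A y : ℝ) ≤ 2 * ε ^ 2 * dArcs A univ univ) (hS : S ⊆ X) :
    HasBalancedCut A ((dArcs A univ univ - |(gap A S (X \ S) Xᶜ : ℝ)|) / 4 -
      ε * dArcs A univ univ) := by
  refine (hasBalancedCut_of_subset (p := 1 / 2) hA hε hX hdeg hS (by norm_num)
    (by norm_num)).mono ?_
  set F := ∑ x ∈ X, if x ∈ S then (1 - 1 / 2 : ℝ) * outDeg A x else 1 / 2 * inDeg A x with hF
  set B := ∑ x ∈ X, if x ∈ S then (1 - 1 / 2 : ℝ) * inDeg A x else 1 / 2 * outDeg A x with hB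
  have hadd : (dArcs A univ univ : ℝ) = 2 * (F + B) + dArcs A Xᶜ Xᶜ := by
    rw [dArcs_univ_univ_eq hX, hF, hB, ← sum_add_distrib, mul_sum]
    push_cast
    congr 1
    refine sum_congr rfl fun x _ => ?_
    rw [deg]
    push_cast
    split_ifs <;> ring
  have hsub : (gap A S (X \ S) Xᶜ : ℝ) = 2 * (F - B) := by
    rw [gap_eq_signedSum hX hS, hF, hB, ← sum_sub_distrib, mul_sum, signedSum]
    refine sum_congr rfl fun x _ => ?_
    rw [netDeg]
    split_ifs <;> ring
  rw [hsub, abs_mul, abs_two, ← max_sub_min_eq_abs', hadd]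
  linarith [min_add_max F B]

/-- The vertices of `X` to be placed in the first part of a cut: those outside `P`, which then
contribute at least `minDeg` in both directions, and those of `P` with the larger outdegree, so
that `P` favours the forward direction. -/
def forwardSide (A : V → V → Prop) [DecidableRel A] (X P : Finset V) : Finset V :=
  {x ∈ X | x ∈ P → inDeg A x ≤ outDeg A x}

lemma le_sum_forwardSide (hP : P ⊆ X) (hp : p ≤ 1 / 2) :
    (1 - p) * ∑ x ∈ X \ P, minDeg A x + p * ∑ x ∈ P, (minDeg A x + sVal A x) ≤
      ∑ x ∈ X, if x ∈ forwardSide A X P then (1 - p) * outDeg A x else p * inDeg A x := by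
  rw [mul_sum, mul_sum, add_comm, ← sum_ite_mem_of_subset hP]
  refine sum_le_sum fun x hx => ?_
  simp only [forwardSide, mem_filter, hx, true_and, minDeg_add_sVal]
  by_cases hxP : x ∈ P
  · obtain h | h := le_or_gt (inDeg A x) (outDeg A x)
    · simp only [hxP, h, forall_const, if_true]
      rw [max_eq_left (Nat.cast_le.2 h)]
      gcongr
      linarith
    · simp only [hxP, h.not_ge, forall_const, if_true, if_false]
      rw [max_eq_right (Nat.cast_le.2 h.le)]
  · simp only [hxP, false_imp_iff, if_true, if_false]
    gcongr
    · linarith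
    · exact min_le_left _ _

lemma le_sum_forwardSide_swap (hP : P ⊆ X) (hN : N ⊆ X \ P)
    (hside : ∀ x ∈ N, outDeg A x ≤ inDeg A x) (hp0 : 0 ≤ p) (hp : p ≤ 1 / 2) :
    (1 - p) * (∑ x ∈ X \ P, minDeg A x + ∑ x ∈ N, (sVal A x : ℝ)) + p * ∑ x ∈ P, minDeg A x ≤
      ∑ x ∈ X, if x ∈ forwardSide A X P then (1 - p) * inDeg A x else p * outDeg A x := by
  have hNsum : ∑ x ∈ N, (sVal A x : ℝ) = ∑ x ∈ X \ P, if x ∈ N then (sVal A x : ℝ) else 0 := by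
    rw [sum_ite_mem, inter_eq_right.2 hN]
  rw [hNsum, ← sum_add_distrib, mul_sum, mul_sum, add_comm, ← sum_ite_mem_of_subset hP]
  refine sum_le_sum fun x hx => ?_
  simp only [forwardSide, mem_filter, hx, true_and]
  by_cases hxP : x ∈ P
  · obtain h | h := le_or_gt (inDeg A x) (outDeg A x)
    · simp only [hxP, h, forall_const, if_true]
      rw [minDeg, min_eq_right (Nat.cast_le.2 h)]
      gcongr
      linarith
    · simp only [hxP, h.not_ge, forall_const, if_true, if_false]
      gcongr
      exact min_le_left _ _
  · simp only [hxP, false_imp_iff, if_true, if_false]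
    gcongr
    · linarith
    · split_ifs with hxN
      · rw [minDeg_add_sVal, max_eq_right (Nat.cast_le.2 (hside x hxN))]
      · rw [add_zero]
        exact min_le_right _ _

lemma hasBalancedCut_of_monochromatic (hA : ∀ v, ¬ A v v) (hε : 0 ≤ ε) (hX : dArcs A X X = 0)
    (hdeg : ∀ y ∈ Xᶜ, (deg A y : ℝ) ≤ 2 * ε ^ 2 * dArcs A univ univ)
    (hP : P ⊆ X) (hN : N ⊆ X \ P)
    (hside : (∀ x ∈ N, outDeg A x ≤ inDeg A x) ∨ ∀ x ∈ N, ¬ outDeg A x ≤ inDeg A x)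
    (hp0 : 0 ≤ p) (hp : p ≤ 1 / 2) :
    HasBalancedCut A (min
      ((1 - p) * ∑ x ∈ X \ P, minDeg A x + p * ∑ x ∈ P, (minDeg A x + sVal A x))
      ((1 - p) * (∑ x ∈ X \ P, minDeg A x + ∑ x ∈ N, (sVal A x : ℝ)) +
        p * ∑ x ∈ P, minDeg A x) +
      p * (1 - p) * dArcs A Xᶜ Xᶜ - ε * dArcs A univ univ) := by
  wlog hle : ∀ x ∈ N, outDeg A x ≤ inDeg A x generalizing A
  · have hswap := this (A := Function.swap A) hA (by rwa [dArcs_swap A]) (fun y hy => ?_)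
      (.inl fun x hx => (not_le.1 (hside.resolve_left hle x hx)).le)
      (fun x hx => (not_le.1 (hside.resolve_left hle x hx)).le)
    · simpa only [minDeg_swap, sVal_swap, dArcs_swap A] using hswap.swap
    · rw [dArcs_swap A, deg, add_comm]
      exact hdeg y hy
  refine (hasBalancedCut_of_subset (S := forwardSide A X P) hA hε hX hdeg (filter_subset _ _) hp0
    (by linarith)).mono ?_
  gcongr
  · exact le_sum_forwardSide hP hp
  · exact le_sum_forwardSide_swap hP hN hle hp0 hp

end BalancedCuts

section Numerics

variable {d k n B C SP SN σ g e m : ℝ}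

lemma mul_le_forward_cut (hd : 1 < d) (hC : 0 ≤ C) (he : 0 ≤ e)
    (hm : m = 2 * (B + C) + SP + SN + g + e) (hθ : m < (2 * d - 1) * (SP - SN - g)) :
    (d - 1) / (2 * (2 * d - 1)) * m ≤ (1 - (d - 1) / (2 * d)) * C + (d - 1) / (2 * d) * (B + SP) +
      (d - 1) / (2 * d) * (1 - (d - 1) / (2 * d)) * e := by
  have hd1 : 0 < 2 * d - 1 := by linarith
  have hslack : 2 * d * (2 * d - 1) * ((1 - (d - 1) / (2 * d)) * C + (d - 1) / (2 * d) * (B + SP) +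
      (d - 1) / (2 * d) * (1 - (d - 1) / (2 * d)) * e - (d - 1) / (2 * (2 * d - 1)) * m) =
      (d - 1) * ((d - 1) * SP - B - C - d * (SN + g) - e / 2) + 2 * (2 * d - 1) * C +
        (d - 1) * (2 * d - 1) / (2 * d) * e := by
    rw [hm]
    field_simp
    ring
  have hmajority : 0 < (d - 1) * ((d - 1) * SP - B - C - d * (SN + g) - e / 2) :=
    mul_pos (by linarith) (by linarith)
  refine sub_nonneg.1 (nonneg_of_mul_nonneg_right (hslack.ge.trans' ?_) (by positivity))
  positivity

lemma lt_of_backward_cut_lt (hd : 1 < d) (hm : m = 2 * (B + C) + SP + SN + g + e)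
    (hP : B + SP ≤ (k + 1) * n) (hσ : σ ≤ SN)
    (hcut : (1 - (d - 1) / (2 * d)) * (C + SN) + (d - 1) / (2 * d) * B +
      (d - 1) / (2 * d) * (1 - (d - 1) / (2 * d)) * e < (d - 1) / (2 * (2 * d - 1)) * m) :
    B + C < 2 * (2 * d - 1) * (k + 1) / (3 * d - 1) * n +
      (d ^ 2 - 5 * d + 2) / (3 * d - 1) * (SP + SN - σ) - (d ^ 2 + 2 * d - 1) / (3 * d - 1) * σ +
      d * (d - 1) / (3 * d - 1) * g - (d - 1) ^ 2 / (2 * d * (3 * d - 1)) * e := by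
  have hd1 : 0 < 2 * d - 1 := by linarith
  have hd3 : 0 < 3 * d - 1 := by linarith
  have hslack : 2 * d * (2 * d - 1) * ((d - 1) / (2 * (2 * d - 1)) * m -
      ((1 - (d - 1) / (2 * d)) * (C + SN) + (d - 1) / (2 * d) * B +
        (d - 1) / (2 * d) * (1 - (d - 1) / (2 * d)) * e)) =
      (d - 1) * B + d * (d - 1) * (SP + g - SN) - (3 * d - 1) * (C + SN) -
        (d - 1) ^ 2 / (2 * d) * e := by
    rw [hm]
    field_simp
    ring
  have hpos : 0 < 2 * d * (2 * d - 1) := by positivity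
  have hlt := hslack ▸ mul_pos hpos (sub_pos.2 hcut)
  have hcollect : 2 * (2 * d - 1) * (k + 1) / (3 * d - 1) * n +
      (d ^ 2 - 5 * d + 2) / (3 * d - 1) * (SP + SN - σ) - (d ^ 2 + 2 * d - 1) / (3 * d - 1) * σ +
      d * (d - 1) / (3 * d - 1) * g - (d - 1) ^ 2 / (2 * d * (3 * d - 1)) * e =
      (2 * (2 * d - 1) * ((k + 1) * n) + (d ^ 2 - 5 * d + 2) * (SP + SN - σ) -
        (d ^ 2 + 2 * d - 1) * σ + d * (d - 1) * g - (d - 1) ^ 2 / (2 * d) * e) / (3 * d - 1) := by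
    field_simp
  rw [hcollect, lt_div_iff₀ hd3]
  have hPd := mul_le_mul_of_nonneg_left hP hd1.le
  have hσd := mul_nonneg (mul_nonneg hd1.le (by linarith : 0 ≤ d - 1)) (sub_nonneg.2 hσ)
  linarith

end Numerics

section Majority

variable {V : Type} [Fintype V] [DecidableEq V] {A : V → V → Prop} [DecidableRel A]
  {X X' N S : Finset V} {d ε : ℝ} {θ : ℤ} {k : ℕ}

lemma mul_card_le_dArcs_univ (hout : ∀ x, d ≤ outDeg A x) :
    d * Fintype.card V ≤ dArcs A univ univ := by
  rw [dArcs_univ_right, Nat.cast_sum, mul_comm, ← nsmul_eq_mul]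
  exact card_nsmul_le_sum univ _ d fun x _ => hout x

lemma dArcs_lt_mul_abs_gap (hA : ∀ v, ¬ A v v) (hd : 1 < d) (hε : 0 ≤ ε) (hX : dArcs A X X = 0)
    (hdeg : ∀ y ∈ Xᶜ, (deg A y : ℝ) ≤ 2 * ε ^ 2 * dArcs A univ univ)
    (hcut : ¬ HasBalancedCut A (((d - 1) / (2 * (2 * d - 1)) - ε) * dArcs A univ univ))
    (hS : S ⊆ X) : (dArcs A univ univ : ℝ) < (2 * d - 1) * |(gap A S (X \ S) Xᶜ : ℝ)| := by
  have hd1 : 0 < 2 * d - 1 := by linarith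
  by_contra! hle
  refine hcut ((hasBalancedCut_of_gap hA hε hX hdeg hS).mono ?_)
  have hc : (d - 1) / (2 * (2 * d - 1)) * dArcs A univ univ =
      (dArcs A univ univ - dArcs A univ univ / (2 * d - 1)) / 4 := by
    rw [sub_div' hd1.ne', div_mul_eq_mul_div, div_div,
      div_eq_div_iff (by positivity) (by positivity)]
    ring
  rw [sub_mul, hc]
  gcongr
  exact (le_div_iff₀' hd1).2 hle

lemma card_lt_two_mul_abs_gap (hA : ∀ v, ¬ A v v) (hd : 1 < d) (hout : ∀ x, d ≤ outDeg A x)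
    (hε : 0 ≤ ε) (hX : dArcs A X X = 0)
    (hdeg : ∀ y ∈ Xᶜ, (deg A y : ℝ) ≤ 2 * ε ^ 2 * dArcs A univ univ)
    (hcut : ¬ HasBalancedCut A (((d - 1) / (2 * (2 * d - 1)) - ε) * dArcs A univ univ))
    (hS : S ⊆ X) : (Fintype.card V : ℝ) < 2 * |(gap A S (X \ S) Xᶜ : ℝ)| := by
  have hlt := (mul_card_le_dArcs_univ hout).trans_lt (dArcs_lt_mul_abs_gap hA hd hε hX hdeg hcut hS)
  refine lt_of_mul_lt_mul_left (a := d) ?_ (by linarith)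
  linarith [abs_nonneg (gap A S (X \ S) Xᶜ : ℝ)]

lemma add_sum_le_sum_sub_sum_of_card_lt (hX : dArcs A X X = 0)
    (hθ : ∀ S ⊆ X, θ ≤ |gap A S (X \ S) Xᶜ|) (hcardθ : (Fintype.card V : ℝ) < 2 * θ)
    (hX' : X' = {x ∈ X | θ ≤ sVal A x}) (hN : N ⊆ X') (hcard : 2 * #N < #X') :
    θ + ∑ x ∈ X \ X', (sVal A x : ℝ) ≤ ∑ x ∈ X' \ N, (sVal A x : ℝ) - ∑ x ∈ N, (sVal A x : ℝ) := by
  have hg : 0 ≤ ∑ x ∈ X \ X', (sVal A x : ℝ) := sum_nonneg fun x _ => cast_sVal_nonneg A x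
  have hsmall : ∀ x ∈ X \ X', 0 ≤ (sVal A x : ℝ) ∧ (sVal A x : ℝ) < θ := fun x hx => by
    refine ⟨cast_sVal_nonneg A x, ?_⟩
    simp only [hX', mem_sdiff, mem_filter, not_and, not_le] at hx
    exact_mod_cast hx.2 hx.1
  have hlarge : ∀ x ∈ X', (θ : ℝ) ≤ sVal A x := fun x hx => by
    rw [hX', mem_filter] at hx
    exact_mod_cast hx.2
  have hle_card (x : V) : (sVal A x : ℝ) ≤ Fintype.card V := by
    linarith [minDeg_nonneg A x, minDeg_add_sVal_le_card A x]
  have h := le_signedSum_of_card_lt (s := fun x => (sVal A x : ℝ)) (S := X') (R := X' \ N)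
    (τ := θ + ∑ x ∈ X \ X', (sVal A x : ℝ)) (fun x _ => cast_sVal_nonneg A x)
    (fun x hx y _ => by linarith [hlarge x hx, hle_card y])
    (fun R _ => add_sum_sdiff_le_abs_signedSum (hX' ▸ filter_subset _ _) hsmall
      (le_abs_signedSum_sVal hX hθ) R)
    sdiff_subset (by rw [card_sdiff_of_subset hN]; omega)
  rwa [signedSum_eq_sum_sub_sum sdiff_subset, Finset.sdiff_sdiff_eq_self hN] at h

theorem sum_minDeg_lt_of_not_hasBalancedCut (hA : ∀ v, ¬ A v v) (hd : 1 < d)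
    (hout : ∀ x, d ≤ outDeg A x) (hε : 0 ≤ ε) (hX : dArcs A X X = 0)
    (hdeg : ∀ y ∈ Xᶜ, (deg A y : ℝ) ≤ 2 * ε ^ 2 * dArcs A univ univ)
    (hcut : ¬ HasBalancedCut A (((d - 1) / (2 * (2 * d - 1)) - ε) * dArcs A univ univ))
    (hθ : IsLeast {t : ℤ | ∃ S ⊆ X, t = |gap A S (X \ S) Xᶜ|} θ)
    (hX' : X' = {x ∈ X | θ ≤ sVal A x}) (hcard : #X' = 2 * k + 1) (hN : N ⊆ X') (hNcard : #N = k)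
    (hside : (∀ x ∈ N, outDeg A x ≤ inDeg A x) ∨ ∀ x ∈ N, ¬ outDeg A x ≤ inDeg A x)
    {σ : ℝ} (hσ : σ ≤ ∑ x ∈ N, (sVal A x : ℝ)) :
    ∑ x ∈ X, minDeg A x < 2 * (2 * d - 1) * (k + 1) / (3 * d - 1) * Fintype.card V +
      (d ^ 2 - 5 * d + 2) / (3 * d - 1) * (∑ x ∈ X', (sVal A x : ℝ) - σ) -
      (d ^ 2 + 2 * d - 1) / (3 * d - 1) * σ +
      d * (d - 1) / (3 * d - 1) * ∑ x ∈ X \ X', (sVal A x : ℝ) -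
      (d - 1) ^ 2 / (2 * d * (3 * d - 1)) * dArcs A Xᶜ Xᶜ := by
  obtain ⟨⟨S, hS, hSθ⟩, hlb⟩ := hθ
  have hmθ : (dArcs A univ univ : ℝ) < (2 * d - 1) * θ := by
    rw [hSθ, Int.cast_abs]
    exact dArcs_lt_mul_abs_gap hA hd hε hX hdeg hcut hS
  have hcardθ : (Fintype.card V : ℝ) < 2 * θ := by
    rw [hSθ, Int.cast_abs]
    exact card_lt_two_mul_abs_gap hA hd hout hε hX hdeg hcut hS
  have hX'X : X' ⊆ X := hX' ▸ filter_subset _ _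
  set P := X' \ N with hP
  have hPX : P ⊆ X := sdiff_subset.trans hX'X
  have hNX : N ⊆ X \ P := fun x hx => mem_sdiff.2 ⟨hX'X (hN hx), fun h => (mem_sdiff.1 h).2 hx⟩
  have hmin : ∑ x ∈ X, minDeg A x = ∑ x ∈ P, minDeg A x + ∑ x ∈ X \ P, minDeg A x := by
    rw [add_comm, sum_sdiff hPX]
  have hX's : ∑ x ∈ X', (sVal A x : ℝ) = ∑ x ∈ P, (sVal A x : ℝ) + ∑ x ∈ N, (sVal A x : ℝ) :=
    (sum_sdiff hN).symm
  have hm := cast_dArcs_univ_univ_eq_of_subset hX hX'X hN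
  have hmaj := add_sum_le_sum_sub_sum_of_card_lt hX (fun S hS => hlb ⟨S, hS, rfl⟩) hcardθ hX' hN
    (by omega)
  have hPcard : ∑ x ∈ P, minDeg A x + ∑ x ∈ P, (sVal A x : ℝ) ≤ (k + 1) * Fintype.card V := by
    have hPk : #P = k + 1 := by
      rw [hP, card_sdiff_of_subset hN]
      omega
    simpa only [hPk, Nat.cast_succ] using sum_minDeg_add_sum_sVal_le A P
  have hfwd := mul_le_forward_cut hd (sum_nonneg fun x _ => minDeg_nonneg A x) (Nat.cast_nonneg _)
    hm (hmθ.trans_le (mul_le_mul_of_nonneg_left (by linarith) (by linarith)))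
  rw [hmin, hX's]
  refine lt_of_backward_cut_lt hd hm hPcard hσ (lt_of_not_ge fun hbwd => hcut ?_)
  refine (hasBalancedCut_of_monochromatic (p := (d - 1) / (2 * d)) hA hε hX hdeg hPX hNX hside
    (div_nonneg (by linarith) (by linarith)) ?_).mono ?_
  · rw [div_le_div_iff₀ (by linarith) two_pos]
    linarith
  · rw [sub_mul, ← min_add_add_right, sum_add_distrib]
    exact sub_le_sub_right (le_min hfwd hbwd) _

end Majority

lemma sum_Icc_eq_sum_add_sum {k : ℕ} (hk : 1 ≤ k) (f : ℕ → ℝ) :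
    ∑ j ∈ Icc 1 (2 * k + 1), f j = ∑ j ∈ Icc 1 (k - 1), f j + f (2 * k) + f (2 * k + 1) +
      ∑ j ∈ Icc k (2 * k - 1), f j := by
  obtain ⟨l, rfl⟩ := Nat.exists_eq_add_of_le' hk
  have hsplit := sum_Ioc_consecutive f l.zero_le (by omega : l ≤ 2 * l + 1)
  simp only [← Icc_add_one_left_eq_Ioc, zero_add] at hsplit
  rw [sum_Icc_succ_top (by omega), show 2 * (l + 1) = 2 * l + 1 + 1 by ring,
    sum_Icc_succ_top (by omega), ← hsplit]
  simp only [add_tsub_cancel_right]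
  ring

theorem stmt10_general {V : Type} [Fintype V] [DecidableEq V] (A : V → V → Prop) [DecidableRel A]
    (hirr : ∀ v, ¬ A v v)
    (n m : ℕ) (hn : n = Fintype.card V) (hm : m = dArcs A univ univ)
    (d : ℝ) (hd : 1 < d) (hout : ∀ x, d ≤ outDeg A x)
    (X Y : Finset V) (hXY : X ∪ Y = univ) (hdXY : Disjoint X Y)
    (heX : dArcs A X X = 0)
    (θ : ℤ) (hθ : IsLeast {t : ℤ | ∃ X₁ ⊆ X, t = |gap A X₁ (X \ X₁) Y|} θ)
    (X' : Finset V) (hX' : X' = X.filter fun x => θ ≤ sVal A x)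
    (g : ℤ) (hg : g = ∑ x ∈ X \ X', sVal A x)
    (b : ℝ) (hb : b = (∑ x ∈ X, ((deg A x : ℝ) - (sVal A x : ℝ))) / 2)
    (k : ℕ) (hk : 1 ≤ k) (hcard : X'.card = 2 * k + 1)
    (ε : ℝ) (hε : 0 ≤ ε) (hdeg : ∀ y ∈ Y, (deg A y : ℝ) ≤ 2 * ε ^ 2 * m) :
    (∃ V₁ V₂ : Finset V, V₁ ∪ V₂ = univ ∧ Disjoint V₁ V₂ ∧
        ((d - 1) / (2 * (2 * d - 1)) - ε) * m ≤
          min (dArcs A V₁ V₂ : ℝ) (dArcs A V₂ V₁ : ℝ)) ∨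
      ∀ v : ℕ → V,
          X' = (Icc 1 (2 * k + 1)).image v →
          Set.InjOn v ↑(Icc 1 (2 * k + 1)) →
          (∀ i ∈ Icc 1 (2 * k + 1), ∀ j ∈ Icc 1 (2 * k + 1), i ≤ j →
            sVal A (v j) ≤ sVal A (v i)) →
        b < 2 * (2 * d - 1) * ((k : ℝ) + 1) / (3 * d - 1) * (n : ℝ) +
          (d ^ 2 - 5 * (d : ℝ) + 2) / (3 * d - 1) *
            ((∑ j ∈ Icc 1 (k - 1), (sVal A (v j) : ℝ)) +
              (sVal A (v (2 * k)) : ℝ) + (sVal A (v (2 * k + 1)) : ℝ)) -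
          (d ^ 2 + 2 * d - 1) / (3 * d - 1) *
            (∑ j ∈ Icc k (2 * k - 1), (sVal A (v j) : ℝ)) +
          d * (d - 1) / (3 * d - 1) * (g : ℝ) -
          (d - 1) ^ 2 / (2 * d * (3 * d - 1)) * (dArcs A Y Y : ℝ) := by
  obtain rfl : Xᶜ = Y := by
    rw [compl_eq_univ_sdiff, ← hXY, union_sdiff_cancel_left hdXY]
  subst hm hn
  refine or_iff_not_imp_left.2 fun hcut v hv hinj hanti => ?_
  obtain ⟨I, hI, hIk, hside⟩ := exists_monochromatic_subset (S := Icc 1 (2 * k - 1)) (k := k)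
    (by rw [Nat.card_Icc]; omega) fun i => outDeg A (v i) ≤ inDeg A (v i)
  have hI' : I ⊆ Icc 1 (2 * k + 1) := hI.trans (Icc_subset_Icc_right (by omega))
  have hIinj : Set.InjOn v I := hinj.mono (coe_subset.2 hI')
  have hσ : ∑ j ∈ Icc k (2 * k - 1), (sVal A (v j) : ℝ) ≤ ∑ x ∈ I.image v, (sVal A x : ℝ) := by
    have hanti' : AntitoneOn (fun j => (sVal A (v j) : ℝ)) (Set.Icc 1 (2 * k - 1)) :=
      fun i hi j hj hij => Int.cast_le.2 <| hanti i (mem_Icc.2 ⟨hi.1, by have := hi.2; omega⟩)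
        j (mem_Icc.2 ⟨hj.1, by have := hj.2; omega⟩) hij
    rw [sum_image hIinj]
    convert sum_Icc_le_sum_of_antitoneOn hanti' hI using 2
    rw [hIk]
    congr 1
    omega
  have h := sum_minDeg_lt_of_not_hasBalancedCut hirr hd hout hε heX hdeg hcut hθ hX' hcard
    (hv ▸ image_subset_image hI') (by rw [card_image_of_injOn hIinj, hIk])
    (by simpa only [forall_mem_image] using hside) hσ
  rw [hv, sum_image hinj, sum_Icc_eq_sum_add_sum hk, add_sub_cancel_right, ← hv] at h
  rw [hb, ← sum_minDeg_eq, hg, Int.cast_sum]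
  exact h

/-- Lemma 3.2(3). -/
theorem stmt10 {V : Type} [Fintype V] [DecidableEq V] (A : V → V → Prop) [DecidableRel A]
    (hirr : ∀ v, ¬ A v v)
    (n m : ℕ) (hn : n = Fintype.card V) (hm : m = dArcs A Finset.univ Finset.univ)
    (d : ℕ) (hd : 4 ≤ d) (hout : ∀ x, d ≤ outDeg A x)
    (X Y : Finset V) (hXY : X ∪ Y = Finset.univ) (hdXY : Disjoint X Y)
    (heX : dArcs A X X = 0)
    (θ : ℤ) (hθ : IsLeast {t : ℤ | ∃ X₁ ⊆ X, t = |gap A X₁ (X \ X₁) Y|} θ)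
    (X' : Finset V) (hX' : X' = X.filter fun x => θ ≤ sVal A x)
    (g : ℤ) (hg : g = ∑ x ∈ X \ X', sVal A x)
    (b : ℝ) (hb : b = (∑ x ∈ X, ((deg A x : ℝ) - (sVal A x : ℝ))) / 2)
    (k : ℕ) (hk : 1 ≤ k) (hcard : X'.card = 2 * k + 1)
    (ε : ℝ) (hε : 0 < ε) (hdeg : ∀ y ∈ Y, (deg A y : ℝ) ≤ ε ^ 2 * m / 4)
    :
    (∃ V₁ V₂ : Finset V, V₁ ∪ V₂ = Finset.univ ∧ Disjoint V₁ V₂ ∧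
        (((d : ℝ) - 1) / (2 * (2 * (d : ℝ) - 1)) - ε) * m ≤
          min (dArcs A V₁ V₂ : ℝ) (dArcs A V₂ V₁ : ℝ)) ∨
      ∀ v : ℕ → V,
          X' = (Finset.Icc 1 (2 * k + 1)).image v →
          Set.InjOn v ↑(Finset.Icc 1 (2 * k + 1)) →
          (∀ i ∈ Finset.Icc 1 (2 * k + 1), ∀ j ∈ Finset.Icc 1 (2 * k + 1), i ≤ j →
            sVal A (v j) ≤ sVal A (v i)) →
        b < 2 * (2 * (d : ℝ) - 1) * ((k : ℝ) + 1) / (3 * (d : ℝ) - 1) * (n : ℝ) +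
          ((d : ℝ) ^ 2 - 5 * (d : ℝ) + 2) / (3 * (d : ℝ) - 1) *
            ((∑ j ∈ Finset.Icc 1 (k - 1), (sVal A (v j) : ℝ)) +
              (sVal A (v (2 * k)) : ℝ) + (sVal A (v (2 * k + 1)) : ℝ)) -
          ((d : ℝ) ^ 2 + 2 * (d : ℝ) - 1) / (3 * (d : ℝ) - 1) *
            (∑ j ∈ Finset.Icc k (2 * k - 1), (sVal A (v j) : ℝ)) +
          (d : ℝ) * ((d : ℝ) - 1) / (3 * (d : ℝ) - 1) * (g : ℝ) -
          ((d : ℝ) - 1) ^ 2 / (2 * (d : ℝ) * (3 * (d : ℝ) - 1)) * (dArcs A Y Y : ℝ) := by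
  have hd' : (1 : ℝ) < d := by exact_mod_cast (by omega : 1 < d)
  have hdeg' : ∀ y ∈ Y, (deg A y : ℝ) ≤ 2 * ε ^ 2 * m := fun y hy =>
    (hdeg y hy).trans (by linarith [mul_nonneg (sq_nonneg ε) m.cast_nonneg])
  exact stmt10_general A hirr n m hn hm d hd' (fun x => Nat.cast_le.2 (hout x)) X Y hXY hdXY heX
    θ hθ X' hX' g hg b hb k hk hcard ε hε.le hdeg'
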